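/- Let CS be a constant specification, let Γ ⊆ Form^Ag, and let 𝓕 be a class of jstit frames for Ag with 𝓕^Ag_reg↓ ⊆ 𝓕 ⊆ 𝓕^Ag_reg (where 𝓕^Ag_reg↓ is the class of unirelational regular jstit frames for Ag). Then Γ is CS-consistent if and only if Γ is satisfiable in Mod_CS(𝓕). -/

import Mathlib

/-! Preliminaries: temporal frames, stit frames, jstit frames, the language of
JA-STIT, jstit models, satisfaction, and the Hilbert system Σ_D(CS). -/

/-- A temporal frame: a nonempty set of moments with a partial order satisfying
historical connection and no backward branching. -/
structure TemporalFrame (Mo : Type) : Type where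
  le : Mo → Mo → Prop
  le_refl : ∀ m, le m m
  le_antisymm : ∀ {m m'}, le m m' → le m' m → m = m'
  le_trans : ∀ {m1 m2 m3}, le m1 m2 → le m2 m3 → le m1 m3
  nonempty : Nonempty Mo
  hist_conn : ∀ m m1, ∃ m2, le m2 m ∧ le m2 m1
  no_backward : ∀ m m1 m2, le m1 m → le m2 m → le m1 m2 ∨ le m2 m1

namespace TemporalFrame

variable {Mo : Type} (T : TemporalFrame Mo)

/-- The strict companion of the temporal order. -/
def lt (m m' : Mo) : Prop := T.le m m' ∧ m ≠ m'

/-- A history is a maximal chain of moments w.r.t. the temporal order. -/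
def IsHistory (h : Set Mo) : Prop :=
  IsChain T.le h ∧ ∀ h' : Set Mo, IsChain T.le h' → h ⊆ h' → h' = h

/-- `T.H m` is the set of histories passing through the moment `m`. -/
def H (m : Mo) : Set (Set Mo) := { h | T.IsHistory h ∧ m ∈ h }

/-- Histories `h` and `g` are undivided at `m`. -/
def Undiv (m : Mo) (h g : Set Mo) : Prop := ∃ m', T.lt m m' ∧ m' ∈ h ∧ m' ∈ g

/-- `m'` is an immediate successor of `m`. -/
def Next (m m' : Mo) : Prop := T.lt m m' ∧ ∀ m'', T.lt m'' m' → T.le m'' m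

/-- Mixed successor condition on (the temporal part of) a frame. -/
def MixSucc : Prop :=
  ∀ m m1 : Mo,
    (T.lt m m1 → ∃ m2, T.le m2 m1 ∧ T.Next m m2) ∨
    (∀ h ∈ T.H m, ∀ g ∈ T.H m, T.Undiv m h g)

end TemporalFrame

/-- A stit frame for an agent community `Ag`: a temporal frame together with a choice
function assigning to each moment and agent a partition of the histories through that
moment, subject to no choice between undivided histories and independence of agents. -/
structure StitFrame (Mo : Type) (Ag : Type) extends TemporalFrame Mo where
  choice : Mo → Ag → Set (Set (Set Mo))
  choice_cell_nonempty : ∀ m j C, C ∈ choice m j → C.Nonempty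
  choice_cell_sub : ∀ m j C, C ∈ choice m j → C ⊆ toTemporalFrame.H m
  choice_cover : ∀ m j h, h ∈ toTemporalFrame.H m → ∃ C ∈ choice m j, h ∈ C
  choice_disjoint : ∀ m j C C', C ∈ choice m j → C' ∈ choice m j →
    (C ∩ C').Nonempty → C = C'
  no_choice_undiv : ∀ m j h h', h ∈ toTemporalFrame.H m → h' ∈ toTemporalFrame.H m →
    toTemporalFrame.Undiv m h h' → ∀ C ∈ choice m j, h ∈ C → h' ∈ C
  independence : ∀ m (f : Ag → Set (Set Mo)), (∀ j, f j ∈ choice m j) →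
    (⋂ j, f j).Nonempty

/-- A justification stit (jstit) frame for `Ag`: a stit frame together with two
epistemic preorders `R ⊆ R_e`, with the temporal order included in `R`. -/
structure JstitFrame (Mo : Type) (Ag : Type) extends StitFrame Mo Ag where
  R : Mo → Mo → Prop
  Re : Mo → Mo → Prop
  R_refl : ∀ m, R m m
  R_trans : ∀ {m1 m2 m3}, R m1 m2 → R m2 m3 → R m1 m3
  Re_refl : ∀ m, Re m m
  Re_trans : ∀ {m1 m2 m3}, Re m1 m2 → Re m2 m3 → Re m1 m3
  R_sub_Re : ∀ {m m'}, R m m' → Re m m'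
  le_sub_R : ∀ {m m'}, le m m' → R m m'

namespace JstitFrame

variable {Mo : Type} {Ag : Type} (F : JstitFrame Mo Ag)

/-- The family `Θ_m` of subsets of the set of moments associated with a moment `m`. -/
def Theta (m : Mo) : Set (Set Mo) :=
  { S | m ∈ S ∧
    (∀ m1 m2, m1 ∈ S → F.Re m1 m2 → m2 ∈ S) ∧
    (∀ m1, (∀ h ∈ F.toTemporalFrame.H m1,
        ∃ m2 ∈ h, F.toTemporalFrame.Next m1 m2 ∧ m2 ∈ S) → m1 ∈ S) ∧
    (∀ m1, m1 ∈ S →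
      (∀ m2, F.toTemporalFrame.lt m2 m1 →
        ∃ m3, F.toTemporalFrame.lt m2 m3 ∧ F.toTemporalFrame.lt m3 m1) →
      ∃ m4, F.toTemporalFrame.lt m4 m1 ∧ m4 ∈ S) }

/-- A jstit frame is unirelational iff `R_e ⊆ R`. -/
def Unirelational : Prop := ∀ m m', F.Re m m' → F.R m m'

/-- Regularity of a jstit frame. -/
def Regular : Prop :=
  ∀ m m1 : Mo, F.toTemporalFrame.lt m m1 →
    (∃ S : Set Mo,
      (∀ m0, F.toTemporalFrame.lt m m0 → F.le m0 m1 → S ∈ F.Theta m0) ∧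
      m ∉ S ∧
      ∃ h' ∈ F.toTemporalFrame.H m,
        (∀ g ∈ F.toTemporalFrame.H m1, ¬ F.toTemporalFrame.Undiv m h' g) ∧
        (∀ m' ∈ h', F.toTemporalFrame.Next m m' → m' ∉ S)) →
    ∃ m2, F.le m2 m1 ∧ F.toTemporalFrame.Next m m2

end JstitFrame

/-- Proof polynomials over proof variables `PVar` and proof constants `PConst`. -/
inductive Pol (PVar PConst : Type) : Type
  | var : PVar → Pol PVar PConst
  | const : PConst → Pol PVar PConst
  | plus : Pol PVar PConst → Pol PVar PConst → Pol PVar PConst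
  | times : Pol PVar PConst → Pol PVar PConst → Pol PVar PConst
  | bang : Pol PVar PConst → Pol PVar PConst

/-- Formulas of JA-STIT. -/
inductive Form (Ag PVar PConst PropVar : Type) : Type
  | pv : PropVar → Form Ag PVar PConst PropVar
  | and : Form Ag PVar PConst PropVar → Form Ag PVar PConst PropVar →
      Form Ag PVar PConst PropVar
  | neg : Form Ag PVar PConst PropVar → Form Ag PVar PConst PropVar
  | stit : Ag → Form Ag PVar PConst PropVar → Form Ag PVar PConst PropVar
  | box : Form Ag PVar PConst PropVar → Form Ag PVar PConst PropVar
  | proves : Pol PVar PConst → Form Ag PVar PConst PropVar → Form Ag PVar PConst PropVar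
  | know : Form Ag PVar PConst PropVar → Form Ag PVar PConst PropVar
  | ann : Pol PVar PConst → Form Ag PVar PConst PropVar

namespace Form

variable {Ag PVar PConst PropVar : Type}

/-- Implication, defined as usual from `¬` and `∧`. -/
def imp (A B : Form Ag PVar PConst PropVar) : Form Ag PVar PConst PropVar :=
  neg (and A (neg B))

/-- Disjunction, defined as usual. -/
def or (A B : Form Ag PVar PConst PropVar) : Form Ag PVar PConst PropVar :=
  neg (and (neg A) (neg B))

/-- The dual `◇` of the historical necessity modality. -/
def dia (A : Form Ag PVar PConst PropVar) : Form Ag PVar PConst PropVar :=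
  neg (box (neg A))

/-- Falsum, defined as usual. -/
def bot [Inhabited PropVar] : Form Ag PVar PConst PropVar :=
  and (pv default) (neg (pv default))

end Form

/-- Conjunction of a nonempty list of formulas (head plus tail). -/
def andList {Ag PVar PConst PropVar : Type} :
    Form Ag PVar PConst PropVar → List (Form Ag PVar PConst PropVar) →
      Form Ag PVar PConst PropVar
  | A, [] => A
  | A, B :: L => Form.and A (andList B L)

/-- Disjunction of a list of formulas. -/
def bigOr {Ag PVar PConst PropVar : Type} [Inhabited PropVar] :
    List (Form Ag PVar PConst PropVar) → Form Ag PVar PConst PropVar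
  | [] => Form.bot
  | [A] => A
  | A :: B :: L => Form.or A (bigOr (B :: L))

/-- A classical propositional tautology: a formula true under every Boolean valuation
commuting with `∧` and `¬` (all other formulas being treated as atoms). -/
def Tautology {Ag PVar PConst PropVar : Type} (A : Form Ag PVar PConst PropVar) : Prop :=
  ∀ v : Form Ag PVar PConst PropVar → Bool,
    (∀ B C, v (Form.and B C) = (v B && v C)) →
    (∀ B, v (Form.neg B) = !v B) →
    v A = true

/-- The axiom schemes (A0)–(A9) of Σ_D. -/
inductive Ax {Ag PVar PConst PropVar : Type} : Form Ag PVar PConst PropVar → Prop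
  -- (A0) classical propositional tautologies
  | a0 {A} : Tautology A → Ax A
  -- (A1) S5 axioms for □
  | boxK {A B} : Ax (Form.imp (Form.box (Form.imp A B))
      (Form.imp (Form.box A) (Form.box B)))
  | boxT {A} : Ax (Form.imp (Form.box A) A)
  | box4 {A} : Ax (Form.imp (Form.box A) (Form.box (Form.box A)))
  | box5 {A} : Ax (Form.imp (Form.neg (Form.box A)) (Form.box (Form.neg (Form.box A))))
  -- (A1) S5 axioms for each [j]
  | stitK {j : Ag} {A B} : Ax (Form.imp (Form.stit j (Form.imp A B))
      (Form.imp (Form.stit j A) (Form.stit j B)))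
  | stitT {j : Ag} {A} : Ax (Form.imp (Form.stit j A) A)
  | stit4 {j : Ag} {A} : Ax (Form.imp (Form.stit j A) (Form.stit j (Form.stit j A)))
  | stit5 {j : Ag} {A} : Ax (Form.imp (Form.neg (Form.stit j A))
      (Form.stit j (Form.neg (Form.stit j A))))
  -- (A2)
  | a2 {j : Ag} {A} : Ax (Form.imp (Form.box A) (Form.stit j A))
  -- (A3), for pairwise distinct agents
  | a3 {p : Ag × Form Ag PVar PConst PropVar} {L : List (Ag × Form Ag PVar PConst PropVar)} :
      (((p :: L).map Prod.fst).Nodup) →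
      Ax (Form.imp
        (andList (Form.dia (Form.stit p.1 p.2)) (L.map fun q => Form.dia (Form.stit q.1 q.2)))
        (Form.dia (andList (Form.stit p.1 p.2) (L.map fun q => Form.stit q.1 q.2))))
  -- (A4)
  | a4 {s t : Pol PVar PConst} {A B} : Ax (Form.imp (Form.proves s (Form.imp A B))
      (Form.imp (Form.proves t A) (Form.proves (Pol.times s t) B)))
  -- (A5)
  | a5 {t : Pol PVar PConst} {A} : Ax (Form.imp (Form.proves t A)
      (Form.and (Form.proves (Pol.bang t) (Form.proves t A)) (Form.know A)))
  -- (A6)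
  | a6 {s t : Pol PVar PConst} {A} : Ax (Form.imp
      (Form.or (Form.proves s A) (Form.proves t A)) (Form.proves (Pol.plus s t) A))
  -- (A7) S4 axioms for K
  | knowK {A B} : Ax (Form.imp (Form.know (Form.imp A B))
      (Form.imp (Form.know A) (Form.know B)))
  | knowT {A} : Ax (Form.imp (Form.know A) A)
  | know4 {A} : Ax (Form.imp (Form.know A) (Form.know (Form.know A)))
  -- (A8)
  | a8 {A} : Ax (Form.imp (Form.know A) (Form.box (Form.know (Form.box A))))
  -- (A9)
  | a9 {t : Pol PVar PConst} : Ax (Form.imp (Form.box (Form.ann t))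
      (Form.know (Form.box (Form.ann t))))

/-- Iterated prefixes `c_n : … : c_1 : A` of instances `A` of the axiom schemes. -/
inductive ConstIter {Ag PVar PConst PropVar : Type} : Form Ag PVar PConst PropVar → Prop
  | base {c : PConst} {A} : Ax A → ConstIter (Form.proves (Pol.const c) A)
  | step {c : PConst} {B} : ConstIter B → ConstIter (Form.proves (Pol.const c) B)

/-- A constant specification: a set of formulas of the form `c_n : … : c_1 : A` with `A`
an instance of (A0)–(A9), closed under deleting the outermost constant. -/
def IsConstSpec {Ag PVar PConst PropVar : Type}
    (CS : Set (Form Ag PVar PConst PropVar)) : Prop :=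
  (∀ B ∈ CS, ConstIter B) ∧
  ∀ (c c' : PConst) (B : Form Ag PVar PConst PropVar),
    Form.proves (Pol.const c) (Form.proves (Pol.const c') B) ∈ CS →
    Form.proves (Pol.const c') B ∈ CS

/-- Provability in Σ_D(CS): axioms (A0)–(A9), modus ponens (R1), K-necessitation (R2),
the rule (R_D) and the rule (R_CS). -/
inductive Proves {Ag PVar PConst PropVar : Type} [Inhabited PropVar]
    (CS : Set (Form Ag PVar PConst PropVar)) : Form Ag PVar PConst PropVar → Prop
  | ax {A} : Ax A → Proves CS A
  | mp {A B} : Proves CS (Form.imp A B) → Proves CS A → Proves CS B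
  | nec {A} : Proves CS A → Proves CS (Form.know A)
  | rd {A : Form Ag PVar PConst PropVar} {ts ss : List (Pol PVar PConst)}
      (hne : ts ++ ss ≠ []) :
      Proves CS (Form.imp (Form.know A)
        (bigOr ((ts.map fun t => Form.neg (Form.box (Form.ann t))) ++
                (ss.map fun s => Form.box (Form.ann s))))) →
      Proves CS (Form.imp (Form.know A)
        (bigOr ((ts.map fun t => Form.neg (Form.ann t)) ++
                (ss.map fun s => Form.ann s))))
  | rcs {B} : B ∈ CS → Proves CS B

/-- Γ is consistent in Σ_D(CS): no finite nonempty conjunction of members of Γ provably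
implies falsum. -/
def CSConsistent {Ag PVar PConst PropVar : Type} [Inhabited PropVar]
    (CS Γ : Set (Form Ag PVar PConst PropVar)) : Prop :=
  ¬ ∃ (A : Form Ag PVar PConst PropVar) (L : List (Form Ag PVar PConst PropVar)),
      A ∈ Γ ∧ (∀ B ∈ L, B ∈ Γ) ∧ Proves CS (Form.imp (andList A L) Form.bot)

/-- A jstit model for `Ag`: a jstit frame together with `Act`, an admissible evidence
function `E` and an evaluation `V`, subject to the semantical constraints. -/
structure JstitModel (Mo : Type) (Ag PVar PConst PropVar : Type)
    extends JstitFrame Mo Ag where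
  act : Mo → Set Mo → Set (Pol PVar PConst)
  ev : Mo → Pol PVar PConst → Set (Form Ag PVar PConst PropVar)
  val : PropVar → Set (Mo × Set Mo)
  -- monotonicity of evidence
  ev_mono : ∀ m m' t, Re m m' → ev m t ⊆ ev m' t
  -- evidence closure properties
  ev_app : ∀ m s t A B, Form.imp A B ∈ ev m s → A ∈ ev m t → B ∈ ev m (Pol.times s t)
  ev_sum_left : ∀ m s t, ev m s ⊆ ev m (Pol.plus s t)
  ev_sum_right : ∀ m s t, ev m t ⊆ ev m (Pol.plus s t)
  ev_bang : ∀ m t A, A ∈ ev m t → Form.proves t A ∈ ev m (Pol.bang t)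
  -- expansion of presented proofs
  expansion : ∀ m m' h, toTemporalFrame.lt m' m → h ∈ toTemporalFrame.H m →
    act m' h ⊆ act m h
  -- no new proofs guaranteed
  no_new : ∀ m t, (∀ h ∈ toTemporalFrame.H m, t ∈ act m h) →
    ∃ m' h, toTemporalFrame.lt m' m ∧ h ∈ toTemporalFrame.H m ∧ t ∈ act m' h
  -- presenting a new proof makes histories divide
  divide : ∀ m h h', h ∈ toTemporalFrame.H m → h' ∈ toTemporalFrame.H m →
    toTemporalFrame.Undiv m h h' → act m h = act m h'
  -- presented proofs are epistemically transparent
  transparent : ∀ m m' t, Re m m' → (∀ h ∈ toTemporalFrame.H m, t ∈ act m h) →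
    ∀ h' ∈ toTemporalFrame.H m', t ∈ act m' h'

namespace JstitModel

variable {Mo Ag PVar PConst PropVar : Type}

/-- `Act_m`, the set of proofs presented at `m` under every history through `m`. -/
def ActM (M : JstitModel Mo Ag PVar PConst PropVar) (m : Mo) : Set (Pol PVar PConst) :=
  { t | ∀ h ∈ M.toTemporalFrame.H m, t ∈ M.act m h }

/-- The satisfaction relation for jstit models. -/
def Sat (M : JstitModel Mo Ag PVar PConst PropVar) :
    Form Ag PVar PConst PropVar → Mo → Set Mo → Prop
  | Form.pv p, m, h => (m, h) ∈ M.val p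
  | Form.and A B, m, h => M.Sat A m h ∧ M.Sat B m h
  | Form.neg A, m, h => ¬ M.Sat A m h
  | Form.stit j A, m, h => ∀ h' C, C ∈ M.choice m j → h ∈ C → h' ∈ C → M.Sat A m h'
  | Form.box A, m, _ => ∀ h' ∈ M.toTemporalFrame.H m, M.Sat A m h'
  | Form.know A, m, _ => ∀ m' h', M.R m m' → h' ∈ M.toTemporalFrame.H m' → M.Sat A m' h'
  | Form.proves t A, m, _ => A ∈ M.ev m t ∧
      ∀ m' h', M.Re m m' → h' ∈ M.toTemporalFrame.H m' → M.Sat A m' h'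
  | Form.ann t, m, h => t ∈ M.act m h

/-- Validity of a formula in a jstit model. -/
def Valid (M : JstitModel Mo Ag PVar PConst PropVar)
    (A : Form Ag PVar PConst PropVar) : Prop :=
  ∀ m h, h ∈ M.toTemporalFrame.H m → M.Sat A m h

end JstitModel

/-- CS-normality of a jstit model. -/
def CSNormal {Mo Ag PVar PConst PropVar : Type}
    (CS : Set (Form Ag PVar PConst PropVar))
    (M : JstitModel Mo Ag PVar PConst PropVar) : Prop :=
  ∀ (c : PConst) (m : Mo) (A : Form Ag PVar PConst PropVar),
    Form.proves (Pol.const c) A ∈ CS → A ∈ M.ev m (Pol.const c)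

/-!
Soundness hinges on the rule `R_D`. Suppose that all of `ts` but none of `ss` are presented under
`h` at `m`. If `ts` are settled at `m`, that is, presented under every history through `m`, the
premise of the rule fails at `m`. Otherwise some history through `m` drops one of `ts`; the set of
moments where that proof is settled then witnesses the hypothesis of regularity, which yields an
immediate successor of `m` inside `h`. The proofs settled at this successor are exactly those
presented under `h` at `m`, so the premise of the rule fails there.

For completeness, `R_D` says precisely that every maximal consistent set `w` has a `K`-accessible
maximal consistent set in which `□Et` holds iff `Et` holds in `w`. Taking the latter as the next
moment after the history `w` gives a transition system, whose unravelling into a tree of finite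
words has immediate successors everywhere and is therefore regular; its epistemic relations
coincide. No proof may be settled at the root, since nothing precedes it, so the root also opens
into an idle branch in which nothing is ever presented.
-/

section Derivability

variable {Ag PVar PConst PropVar : Type} {A B C : Form Ag PVar PConst PropVar}

namespace Tautology

theorem imp_self : Tautology (A.imp A) := by
  intro v hand hneg
  simp only [Form.imp, hand, hneg]
  cases v A <;> rfl

theorem imp_const : Tautology (A.imp (B.imp A)) := by
  intro v hand hneg
  simp only [Form.imp, hand, hneg]
  cases v A <;> cases v B <;> rfl

theorem imp_distrib : Tautology ((A.imp (B.imp C)).imp ((A.imp B).imp (A.imp C))) := by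
  intro v hand hneg
  simp only [Form.imp, hand, hneg]
  cases v A <;> cases v B <;> cases v C <;> rfl

theorem and_left : Tautology ((A.and B).imp A) := by
  intro v hand hneg
  simp only [Form.imp, hand, hneg]
  cases v A <;> cases v B <;> rfl

theorem and_right : Tautology ((A.and B).imp B) := by
  intro v hand hneg
  simp only [Form.imp, hand, hneg]
  cases v A <;> cases v B <;> rfl

theorem and_intro : Tautology (A.imp (B.imp (A.and B))) := by
  intro v hand hneg
  simp only [Form.imp, hand, hneg]
  cases v A <;> cases v B <;> rfl

variable [Inhabited PropVar]

theorem neg_elim : Tautology (A.neg.imp (A.imp Form.bot)) := by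
  intro v hand hneg
  simp only [Form.imp, Form.bot, hand, hneg]
  cases v A <;> simp

theorem neg_intro : Tautology ((A.imp Form.bot).imp A.neg) := by
  intro v hand hneg
  simp only [Form.imp, Form.bot, hand, hneg]
  cases v A <;> simp

theorem by_contra : Tautology ((A.neg.imp Form.bot).imp A) := by
  intro v hand hneg
  simp only [Form.imp, Form.bot, hand, hneg]
  cases v A <;> simp

end Tautology

variable [Inhabited PropVar]

/-- Derivability of a formula from the hypotheses `Γ`: modus ponens is the only rule that may be
applied below a hypothesis, so `K`-necessitation and `R_D` act on theorems of `Σ_D(CS)` only. -/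
inductive Derives (CS Γ : Set (Form Ag PVar PConst PropVar)) : Form Ag PVar PConst PropVar → Prop
  | hyp {D : Form Ag PVar PConst PropVar} : D ∈ Γ → Derives CS Γ D
  | thm {D : Form Ag PVar PConst PropVar} : Proves CS D → Derives CS Γ D
  | mp {D E : Form Ag PVar PConst PropVar} :
      Derives CS Γ (D.imp E) → Derives CS Γ D → Derives CS Γ E

theorem Tautology.proves (CS : Set (Form Ag PVar PConst PropVar)) (h : Tautology A) :
    Proves CS A :=
  .ax (.a0 h)

namespace Derives

variable {CS Γ Δ : Set (Form Ag PVar PConst PropVar)}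

theorem mp_thm (h : Proves CS (A.imp B)) (hA : Derives CS Γ A) : Derives CS Γ B :=
  .mp (.thm h) hA

theorem mp_tautology (h : Tautology (A.imp B)) (hA : Derives CS Γ A) : Derives CS Γ B :=
  mp_thm (h.proves CS) hA

theorem mono (hΓ : Γ ⊆ Δ) (h : Derives CS Γ A) : Derives CS Δ A := by
  induction h with
  | hyp hA => exact .hyp (hΓ hA)
  | thm hA => exact .thm hA
  | mp _ _ ihAB ihA => exact .mp ihAB ihA

theorem imp_intro (h : Derives CS (insert B Γ) A) : Derives CS Γ (B.imp A) := by
  induction h with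
  | hyp hA =>
    obtain rfl | hA := hA
    · exact .thm (Tautology.imp_self.proves CS)
    · exact mp_tautology .imp_const (.hyp hA)
  | thm hA => exact mp_tautology .imp_const (.thm hA)
  | mp _ _ ihAB ihA => exact .mp (mp_tautology .imp_distrib ihAB) ihA

theorem proves (h : Derives CS ∅ A) : Proves CS A := by
  induction h with
  | hyp hA => exact hA.elim
  | thm hA => exact hA
  | mp _ _ ihAB ihA => exact .mp ihAB ihA

theorem exists_list_image {ι : Type*} {f : ι → Form Ag PVar PConst PropVar} {s : Set ι}
    (h : Derives CS (Γ ∪ f '' s) A) :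
    ∃ l : List ι, (∀ i ∈ l, i ∈ s) ∧ Derives CS (Γ ∪ f '' {i | i ∈ l}) A := by
  induction h with
  | hyp hA =>
    obtain hA | ⟨i, hi, rfl⟩ := hA
    · exact ⟨[], by simp, .hyp (.inl hA)⟩
    · exact ⟨[i], by simpa using hi, .hyp (.inr ⟨i, by simp, rfl⟩)⟩
  | thm hA => exact ⟨[], by simp, .thm hA⟩
  | mp _ _ ihAB ihA =>
    obtain ⟨l, hl, hAB⟩ := ihAB
    obtain ⟨l', hl', hA⟩ := ihA
    refine ⟨l ++ l', fun i hi => (List.mem_append.1 hi).elim (hl i) (hl' i), .mp (hAB.mono ?_)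
      (hA.mono ?_)⟩
    · exact Set.union_subset_union_right _ <|
        Set.image_mono fun i hi => List.mem_append_left _ hi
    · exact Set.union_subset_union_right _ <|
        Set.image_mono fun i hi => List.mem_append_right _ hi

theorem exists_list (h : Derives CS Γ A) :
    ∃ l : List (Form Ag PVar PConst PropVar), (∀ B ∈ l, B ∈ Γ) ∧ Derives CS {B | B ∈ l} A := by
  obtain ⟨l, hl, h⟩ := exists_list_image (Γ := ∅) (f := id) (s := Γ) (by simpa using h)
  exact ⟨l, hl, by simpa using h⟩

end Derives

end Derivability

section Worlds

variable {Ag PVar PConst PropVar : Type} [Inhabited PropVar]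

/-- A maximal `CS`-consistent set of formulas; these are the building blocks of the canonical
model. Consistency is expressed by underivability of `⊥`, which unlike `CSConsistent` also makes
sense for the empty set of hypotheses. -/
structure World (CS : Set (Form Ag PVar PConst PropVar)) where
  carrier : Set (Form Ag PVar PConst PropVar)
  not_derives_bot : ¬ Derives CS carrier Form.bot
  mem_or_neg_mem : ∀ A, A ∈ carrier ∨ A.neg ∈ carrier

variable {CS Γ : Set (Form Ag PVar PConst PropVar)} {A B : Form Ag PVar PConst PropVar}

namespace World

instance : SetLike (World CS) (Form Ag PVar PConst PropVar) where
  coe := carrier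
  coe_injective := by
    rintro ⟨Γ, _, _⟩ ⟨Δ, _, _⟩ (rfl : Γ = Δ)
    rfl

variable {w : World CS}

theorem neg_mem_iff : A.neg ∈ w ↔ A ∉ w := by
  refine ⟨fun hneg hA => w.not_derives_bot ?_, (w.mem_or_neg_mem A).resolve_left⟩
  exact .mp (.mp_tautology .neg_elim (.hyp hneg)) (.hyp hA)

theorem mem_of_derives (hA : Derives CS w A) : A ∈ w := by
  by_contra hAw
  exact w.not_derives_bot (.mp (.mp_tautology .neg_elim (.hyp (neg_mem_iff.2 hAw))) hA)

theorem mem_of_proves (hA : Proves CS A) : A ∈ w :=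
  mem_of_derives (.thm hA)

theorem mem_of_imp (h : Proves CS (A.imp B)) (hA : A ∈ w) : B ∈ w :=
  mem_of_derives (.mp_thm h (.hyp hA))

theorem and_mem_iff : A.and B ∈ w ↔ A ∈ w ∧ B ∈ w := by
  refine ⟨fun h => ⟨mem_of_imp (Tautology.and_left.proves CS) h,
    mem_of_imp (Tautology.and_right.proves CS) h⟩, fun ⟨hA, hB⟩ => ?_⟩
  exact mem_of_derives (.mp (.mp_tautology .and_intro (.hyp hA)) (.hyp hB))

theorem imp_mem_iff : A.imp B ∈ w ↔ (A ∈ w → B ∈ w) := by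
  simp only [Form.imp, neg_mem_iff, and_mem_iff, not_and_not_right]

theorem or_mem_iff : A.or B ∈ w ↔ A ∈ w ∨ B ∈ w := by
  simp only [Form.or, neg_mem_iff, and_mem_iff]
  tauto

theorem bot_notMem : Form.bot ∉ w := fun h =>
  w.not_derives_bot (.hyp h)

theorem andList_mem_iff {L : List (Form Ag PVar PConst PropVar)} :
    andList A L ∈ w ↔ ∀ B ∈ A :: L, B ∈ w := by
  induction L generalizing A with
  | nil => simp [andList]
  | cons B L ih => rw [andList, and_mem_iff, ih, List.forall_mem_cons (a := A)]

theorem bigOr_mem_iff {L : List (Form Ag PVar PConst PropVar)} :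
    bigOr L ∈ w ↔ ∃ B ∈ L, B ∈ w := by
  induction L with
  | nil => simp [bigOr, bot_notMem]
  | cons A L ih =>
    cases L with
    | nil => simp [bigOr]
    | cons B L => rw [bigOr, or_mem_iff, ih, List.exists_mem_cons_iff (a := A)]

end World

theorem isOfFiniteCharacter_not_derives_bot (CS : Set (Form Ag PVar PConst PropVar)) :
    Order.IsOfFiniteCharacter {Γ | ¬ Derives CS Γ Form.bot} := by
  refine fun Γ => ⟨fun hΓ Δ hΔ _ hbot => hΓ (hbot.mono hΔ), fun hfin hbot => ?_⟩
  obtain ⟨l, hl, hbot⟩ := hbot.exists_list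
  exact hfin {B | B ∈ l} hl l.finite_toSet hbot

theorem exists_world_of_not_derives_bot (hΓ : ¬ Derives CS Γ Form.bot) :
    ∃ w : World CS, Γ ⊆ w := by
  obtain ⟨Δ, hΓΔ, hΔ⟩ := (isOfFiniteCharacter_not_derives_bot CS).exists_maximal hΓ
  have hcons : ¬ Derives CS Δ Form.bot := hΔ.prop
  refine ⟨⟨Δ, hcons, fun A => or_iff_not_imp_left.2 fun hA => ?_⟩, hΓΔ⟩
  have hbot : Derives CS (insert A Δ) Form.bot := by
    by_contra hcons'
    exact hA (hΔ.eq_of_ge hcons' (Set.subset_insert A Δ) ▸ Set.mem_insert A Δ)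
  have hneg : Derives CS Δ A.neg := .mp_tautology .neg_intro hbot.imp_intro
  by_contra hA'
  refine hA' (hΔ.eq_of_ge (y := insert A.neg Δ) (fun hbot' => hcons ?_)
    (Set.subset_insert _ _) ▸ Set.mem_insert A.neg Δ)
  exact .mp hbot'.imp_intro hneg

theorem derives_iff_forall_world : Derives CS Γ A ↔ ∀ w : World CS, Γ ⊆ w → A ∈ w := by
  refine ⟨fun h w hw => w.mem_of_derives (h.mono hw), fun h => by_contra fun hA => ?_⟩
  obtain ⟨w, hw⟩ := exists_world_of_not_derives_bot (CS := CS) (Γ := insert A.neg Γ)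
    fun hbot => hA (.mp_tautology .by_contra hbot.imp_intro)
  exact World.neg_mem_iff.1 (hw (Set.mem_insert _ _))
    (h w ((Set.subset_insert _ _).trans hw))

theorem proves_iff_forall_world : Proves CS A ↔ ∀ w : World CS, A ∈ w :=
  ⟨fun h _ => World.mem_of_proves h,
    fun h => (derives_iff_forall_world.2 fun w _ => h w : Derives CS ∅ A).proves⟩

theorem CSConsistent.not_derives_bot (hΓ : CSConsistent CS Γ) (hne : Γ.Nonempty) :
    ¬ Derives CS Γ Form.bot := by
  obtain ⟨A, hA⟩ := hne
  intro hbot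
  obtain ⟨L, hL, hbot⟩ := hbot.exists_list
  refine hΓ ⟨A, L, hA, hL, proves_iff_forall_world.2 fun w => World.imp_mem_iff.2 fun hAL => ?_⟩
  exact w.mem_of_derives <| hbot.mono fun B hB =>
    World.andList_mem_iff.1 hAL B (List.mem_cons_of_mem A hB)

end Worlds

section Modalities

variable {Ag PVar PConst PropVar : Type} [Inhabited PropVar]
variable {CS : Set (Form Ag PVar PConst PropVar)} {A B : Form Ag PVar PConst PropVar}
variable {M : Form Ag PVar PConst PropVar → Form Ag PVar PConst PropVar} {w v u : World CS}

/-- The operator `M` on formulas is a normal modality of `Σ_D(CS)`. -/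
structure IsNormalModality (CS : Set (Form Ag PVar PConst PropVar))
    (M : Form Ag PVar PConst PropVar → Form Ag PVar PConst PropVar) : Prop where
  distrib : ∀ A B, Proves CS ((M (A.imp B)).imp ((M A).imp (M B)))
  nec : ∀ {A}, Proves CS A → Proves CS (M A)

/-- The operator `M` on formulas is an S5 modality of `Σ_D(CS)`, such as `□` and every `[j]`. -/
structure IsS5Modality (CS : Set (Form Ag PVar PConst PropVar))
    (M : Form Ag PVar PConst PropVar → Form Ag PVar PConst PropVar) : Prop
    extends IsNormalModality CS M where
  elim : ∀ A, Proves CS ((M A).imp A)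
  four : ∀ A, Proves CS ((M A).imp (M (M A)))
  five : ∀ A, Proves CS ((M A).neg.imp (M (M A).neg))

namespace IsNormalModality

theorem mem_of_derives (hM : IsNormalModality CS M) (h : Derives CS {B | M B ∈ w} A) : M A ∈ w := by
  induction h with
  | hyp hA => exact hA
  | thm hA => exact World.mem_of_proves (hM.nec hA)
  | mp _ _ ihAB ihA => exact World.imp_mem_iff.1 (World.mem_of_imp (hM.distrib _ _) ihAB) ihA

theorem and_mem_iff (hM : IsNormalModality CS M) : M (A.and B) ∈ w ↔ M A ∈ w ∧ M B ∈ w := by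
  refine ⟨fun h => ⟨hM.mem_of_derives ?_, hM.mem_of_derives ?_⟩,
    fun ⟨hA, hB⟩ => hM.mem_of_derives ?_⟩
  · exact .mp_tautology .and_left (.hyp h)
  · exact .mp_tautology .and_right (.hyp h)
  · exact .mp (.mp_tautology .and_intro (.hyp hA)) (.hyp hB)

theorem mem_iff (hM : IsNormalModality CS M) :
    M A ∈ w ↔ ∀ v : World CS, (∀ B, M B ∈ w → B ∈ v) → A ∈ v :=
  ⟨fun h _ hv => hv A h, fun h => hM.mem_of_derives (derives_iff_forall_world.2 h)⟩

end IsNormalModality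

/-- The canonical equivalence relation of an S5 modality: the two worlds contain the same formulas
of the form `M A`. -/
def World.AgreeOn (M : Form Ag PVar PConst PropVar → Form Ag PVar PConst PropVar)
    (w v : World CS) : Prop :=
  ∀ A, M A ∈ w ↔ M A ∈ v

namespace World.AgreeOn

@[refl]
theorem refl (w : World CS) : w.AgreeOn M w := fun _ => Iff.rfl

@[symm]
theorem symm (h : w.AgreeOn M v) : v.AgreeOn M w := fun A => (h A).symm

@[trans]
theorem trans (h : w.AgreeOn M v) (h' : v.AgreeOn M u) : w.AgreeOn M u :=
  fun A => (h A).trans (h' A)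

end World.AgreeOn

namespace IsS5Modality

theorem agreeOn (hM : IsS5Modality CS M) (h : ∀ A, M A ∈ w → A ∈ v) : w.AgreeOn M v := by
  refine fun A => ⟨fun hA => h _ (World.mem_of_imp (hM.four A) hA), fun hA => ?_⟩
  by_contra hAw
  exact World.neg_mem_iff.1 (h _ (World.mem_of_imp (hM.five A) (World.neg_mem_iff.2 hAw))) hA

theorem mem_of_agreeOn (hM : IsS5Modality CS M) (hA : M A ∈ w) (h : w.AgreeOn M v) : A ∈ v :=
  World.mem_of_imp (hM.elim A) ((h A).1 hA)

theorem mem_iff (hM : IsS5Modality CS M) : M A ∈ w ↔ ∀ v, w.AgreeOn M v → A ∈ v :=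
  ⟨fun hA _ => hM.mem_of_agreeOn hA, fun h => hM.toIsNormalModality.mem_iff.2 fun v hv =>
    h v (hM.agreeOn hv)⟩

end IsS5Modality

theorem isNormalModality_know (CS : Set (Form Ag PVar PConst PropVar)) :
    IsNormalModality CS Form.know where
  distrib _ _ := .ax .knowK
  nec := .nec

theorem isS5Modality_box (CS : Set (Form Ag PVar PConst PropVar)) : IsS5Modality CS Form.box where
  distrib _ _ := .ax .boxK
  nec h := .mp (.ax .knowT) (.mp (.ax .boxT) (.mp (.ax .a8) (.nec h)))
  elim _ := .ax .boxT
  four _ := .ax .box4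
  five _ := .ax .box5

theorem isS5Modality_stit (CS : Set (Form Ag PVar PConst PropVar)) (j : Ag) :
    IsS5Modality CS (Form.stit j) where
  distrib _ _ := .ax .stitK
  nec h := .mp (.ax .a2) ((isS5Modality_box CS).nec h)
  elim _ := .ax .stitT
  four _ := .ax .stit4
  five _ := .ax .stit5

namespace World

theorem AgreeOn.box_of_stit {j : Ag} (h : w.AgreeOn (Form.stit j) v) : w.AgreeOn Form.box v :=
  (isS5Modality_box CS).agreeOn fun _ hA =>
    (isS5Modality_stit CS j).mem_of_agreeOn (mem_of_imp (.ax .a2) hA) h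

theorem dia_mem_iff : A.dia ∈ w ↔ ∃ v, w.AgreeOn Form.box v ∧ A ∈ v := by
  simp only [Form.dia, neg_mem_iff, (isS5Modality_box CS).mem_iff, not_forall, not_not, exists_prop]

/-- The canonical accessibility relation of the knowledge modality `K`. -/
def Accessible (w v : World CS) : Prop :=
  ∀ A : Form Ag PVar PConst PropVar, A.know ∈ w → A.know ∈ v

namespace Accessible

theorem refl (w : World CS) : w.Accessible w := fun _ => id

theorem trans (h : w.Accessible v) (h' : v.Accessible u) : w.Accessible u :=
  fun A hA => h' A (h A hA)

theorem mem (h : w.Accessible v) (hA : A.know ∈ w) : A ∈ v :=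
  mem_of_imp (.ax .knowT) (h A hA)

theorem proves_mem {t : Pol PVar PConst} (h : w.Accessible v) (hA : A.proves t ∈ w) :
    A.proves t ∈ v := by
  have hbang : (A.proves t).proves t.bang ∈ w := (and_mem_iff.1 (mem_of_imp (.ax .a5) hA)).1
  exact h.mem (and_mem_iff.1 (mem_of_imp (.ax .a5) hbang)).2

theorem box_ann_mem {t : Pol PVar PConst} (h : w.Accessible v) (ht : (Form.ann t).box ∈ w) :
    (Form.ann t).box ∈ v :=
  h.mem (mem_of_imp (.ax .a9) ht)

end Accessible

theorem know_mem_iff : A.know ∈ w ↔ ∀ v, w.Accessible v → A ∈ v :=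
  ⟨fun hA _ h => h.mem hA, fun h => (isNormalModality_know CS).mem_iff.2 fun v hv =>
    h v fun _ hB => hv _ (mem_of_imp (.ax .know4) hB)⟩

theorem AgreeOn.accessible (h : w.AgreeOn Form.box v) : w.Accessible v := by
  intro A hA
  have hbox : A.know.box.know.box ∈ w := mem_of_imp (.ax .a8) (mem_of_imp (.ax .know4) hA)
  have hmem : A.know.box.know ∈ v := (isS5Modality_box CS).mem_of_agreeOn hbox h
  exact mem_of_imp (.ax .boxT) (mem_of_imp (.ax .knowT) hmem)

end World

theorem World.exists_agreeOn_box_of_dia_stit_mem (s : Finset Ag)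
    (g : Ag → Form Ag PVar PConst PropVar) (h : ∀ j ∈ s, ((g j).stit j).dia ∈ w) :
    ∃ v, w.AgreeOn Form.box v ∧ ∀ j ∈ s, (g j).stit j ∈ v := by
  obtain rfl | ⟨j₀, hj₀⟩ := s.eq_empty_or_nonempty
  · exact ⟨w, .refl w, by simp⟩
  obtain ⟨j, l, hl⟩ :=
    List.exists_cons_of_ne_nil (Finset.toList_eq_nil.not.2 (Finset.ne_empty_of_mem hj₀))
  simp only [← Finset.mem_toList, hl] at h ⊢
  have hnodup : (((j, g j) :: l.map fun i => (i, g i)).map Prod.fst).Nodup := by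
    simpa [Function.comp_def, ← hl] using s.nodup_toList
  have hdia := mem_of_imp (w := w) (.ax (.a3 hnodup)) <| andList_mem_iff.2 <| by
    simpa using h
  obtain ⟨v, hv, hmem⟩ := dia_mem_iff.1 hdia
  exact ⟨v, hv, by simpa using andList_mem_iff.1 hmem⟩

open Classical in
theorem Derives.exists_finset_stit {f : Ag → World CS}
    (h : Derives CS {D | D.box ∈ w ∨ ∃ j, D.stit j ∈ f j} B) :
    ∃ (s : Finset Ag) (g : Ag → Form Ag PVar PConst PropVar), (∀ j, (g j).stit j ∈ f j) ∧
      ∀ v, w.AgreeOn Form.box v → (∀ j ∈ s, (g j).stit j ∈ v) → B ∈ v := by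
  have top_mem (j : Ag) (u : World CS) : Form.bot.neg.stit j ∈ u :=
    (isS5Modality_stit CS j).mem_iff.2 fun _ _ => World.neg_mem_iff.2 World.bot_notMem
  induction h with
  | @hyp B hB =>
    obtain hB | ⟨j, hB⟩ := hB
    · exact ⟨∅, fun _ => Form.bot.neg, fun j => top_mem j _,
        fun v hv _ => (isS5Modality_box CS).mem_of_agreeOn hB hv⟩
    · refine ⟨{j}, Function.update (fun _ => Form.bot.neg) j B, fun i => ?_, fun v _ hv => ?_⟩
      · obtain rfl | hij := eq_or_ne i j
        · simpa using hB
        · simpa [hij] using top_mem i _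
      · exact World.mem_of_imp (.ax .stitT) (by simpa using hv j)
  | thm hB =>
    exact ⟨∅, fun _ => Form.bot.neg, fun j => top_mem j _, fun v _ _ => World.mem_of_proves hB⟩
  | mp _ _ ihAB ihA =>
    obtain ⟨s, g, hg, hAB⟩ := ihAB
    obtain ⟨s', g', hg', hA⟩ := ihA
    have and_mem_iff (j : Ag) (u : World CS) :
        ((g j).and (g' j)).stit j ∈ u ↔ (g j).stit j ∈ u ∧ (g' j).stit j ∈ u :=
      (isS5Modality_stit CS j).and_mem_iff
    refine ⟨s ∪ s', fun j => (g j).and (g' j), fun j => (and_mem_iff j _).2 ⟨hg j, hg' j⟩,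
      fun v hv hmem => ?_⟩
    simp only [and_mem_iff, Finset.mem_union] at hmem
    exact World.imp_mem_iff.1 (hAB v hv fun j hj => (hmem j (.inl hj)).1)
      (hA v hv fun j hj => (hmem j (.inr hj)).2)

theorem World.exists_agreeOn_stit (f : Ag → World CS) (hf : ∀ j, w.AgreeOn Form.box (f j)) :
    ∃ v, w.AgreeOn Form.box v ∧ ∀ j, (f j).AgreeOn (Form.stit j) v := by
  obtain ⟨v, hv⟩ := exists_world_of_not_derives_bot (CS := CS)
      (Γ := {D | D.box ∈ w ∨ ∃ j, D.stit j ∈ f j}) fun hbot => by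
    obtain ⟨s, g, hg, hbot⟩ := hbot.exists_finset_stit
    obtain ⟨v, hv, hmem⟩ := exists_agreeOn_box_of_dia_stit_mem s g fun j _ =>
      dia_mem_iff.2 ⟨f j, hf j, hg j⟩
    exact bot_notMem (hbot v hv hmem)
  exact ⟨v, (isS5Modality_box CS).agreeOn fun A hA => hv (.inl hA),
    fun j => (isS5Modality_stit CS j).agreeOn fun A hA => hv (.inr ⟨j, hA⟩)⟩

theorem Derives.exists_know_imp (h : Derives CS (Form.know '' {A | A.know ∈ w}) B) :
    ∃ A, Form.know A ∈ w ∧ Proves CS (A.know.imp B) := by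
  induction h with
  | hyp hB =>
    obtain ⟨A, hA, rfl⟩ := hB
    exact ⟨A, hA, Tautology.imp_self.proves CS⟩
  | @thm B hB => exact ⟨B, World.mem_of_proves (.nec hB), .ax .knowT⟩
  | mp _ _ ihAB ihA =>
    obtain ⟨C, hC, hCAB⟩ := ihAB
    obtain ⟨D, hD, hDA⟩ := ihA
    refine ⟨C.and D, (isNormalModality_know CS).and_mem_iff.2 ⟨hC, hD⟩,
      proves_iff_forall_world.2 fun v => World.imp_mem_iff.2 fun hCD => ?_⟩
    rw [(isNormalModality_know CS).and_mem_iff] at hCD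
    exact World.imp_mem_iff.1 (World.mem_of_imp hCAB hCD.1) (World.mem_of_imp hDA hCD.2)

theorem World.bigOr_ann_mem {ts ss : List (Pol PVar PConst)}
    (h : Derives CS (Form.know '' {A | A.know ∈ w})
      (bigOr ((ts.map fun t => (Form.ann t).box.neg) ++ (ss.map fun s => (Form.ann s).box)))) :
    bigOr ((ts.map fun t => (Form.ann t).neg) ++ (ss.map fun s => Form.ann s)) ∈ w := by
  by_cases hne : ts ++ ss = []
  · obtain ⟨rfl, rfl⟩ := List.append_eq_nil_iff.1 hne
    exact w.mem_of_derives (h.mono (Set.image_subset_iff.2 fun _ => id))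
  · obtain ⟨A, hA, hAor⟩ := h.exists_know_imp
    exact mem_of_imp (.rd hne hAor) hA

theorem World.exists_accessible_box_ann_mem_iff (w : World CS) :
    ∃ v, w.Accessible v ∧ ∀ t, (Form.ann t).box ∈ v ↔ Form.ann t ∈ w := by
  let pos (t : Pol PVar PConst) : Form Ag PVar PConst PropVar := (Form.ann t).box
  let neg (t : Pol PVar PConst) : Form Ag PVar PConst PropVar := (Form.ann t).box.neg
  let known : Set (Form Ag PVar PConst PropVar) := Form.know '' {A | A.know ∈ w}
  obtain ⟨v, hv⟩ := exists_world_of_not_derives_bot (CS := CS)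
      (Γ := known ∪ neg '' {t | Form.ann t ∉ w} ∪ pos '' {t | Form.ann t ∈ w}) fun hbot => by
    obtain ⟨ts, hts, hbot⟩ := hbot.exists_list_image
    rw [Set.union_right_comm] at hbot
    obtain ⟨ss, hss, hbot⟩ := hbot.exists_list_image
    have hor : Derives CS known (bigOr (ts.map neg ++ ss.map pos)) := by
      refine derives_iff_forall_world.2 fun v hv => by_contra fun hor => ?_
      simp only [bigOr_mem_iff, List.mem_append, List.mem_map, not_exists, not_and] at hor
      refine bot_notMem <| v.mem_of_derives <| hbot.mono <|
        Set.union_subset (Set.union_subset hv ?_) ?_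
      · rintro _ ⟨t, ht, rfl⟩
        exact not_not.1 fun h => hor _ (.inl ⟨t, ht, rfl⟩) (neg_mem_iff.2 h)
      · rintro _ ⟨s, hs, rfl⟩
        exact neg_mem_iff.2 (hor _ (.inr ⟨s, hs, rfl⟩))
    obtain ⟨A, hA, hAw⟩ := bigOr_mem_iff.1 (bigOr_ann_mem hor)
    obtain hA | hA := List.mem_append.1 hA <;> obtain ⟨t, ht, rfl⟩ := List.mem_map.1 hA
    · exact neg_mem_iff.1 hAw (hts t ht)
    · exact hss t ht hAw
  refine ⟨v, fun A hA => hv (.inl (.inl ⟨A, hA, rfl⟩)), fun t => ⟨fun ht => ?_, fun ht =>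
    hv (.inr ⟨t, ht, rfl⟩)⟩⟩
  by_contra htw
  exact neg_mem_iff.1 (hv (.inl (.inr ⟨t, htw, rfl⟩))) ht

end Modalities

section TemporalFrames

namespace TemporalFrame

variable {Mo : Type} {T : TemporalFrame Mo} {h h' c : Set Mo} {m m' : Mo}

theorem IsHistory.mem_of_comparable (hh : T.IsHistory h) (hm : ∀ x ∈ h, T.le m x ∨ T.le x m) :
    m ∈ h := by
  have hins : insert m h = h := hh.2 _ (hh.1.insert fun x hx _ => hm x hx) (Set.subset_insert m h)
  exact hins ▸ Set.mem_insert m h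

theorem IsHistory.le_total (hh : T.IsHistory h) (hm : m ∈ h) (hm' : m' ∈ h) :
    T.le m m' ∨ T.le m' m := by
  obtain rfl | hne := eq_or_ne m m'
  · exact .inl (T.le_refl m)
  · exact hh.1 hm hm' hne

theorem IsHistory.mem_of_le (hh : T.IsHistory h) (hle : T.le m m') (hm' : m' ∈ h) : m ∈ h :=
  hh.mem_of_comparable fun x hx => (hh.le_total hm' hx).elim
    (fun hx' => .inl (T.le_trans hle hx')) fun hx' => T.no_backward m' m x hle hx'

theorem H_anti (hle : T.le m m') : T.H m' ⊆ T.H m :=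
  fun _ hh => ⟨hh.1, hh.1.mem_of_le hle hh.2⟩

theorem exists_lt_mem_of_ne (hh : h ∈ T.H m) (hh' : h' ∈ T.H m) (hne : h ≠ h') :
    ∃ m1 ∈ h, T.lt m m1 := by
  by_contra! hmax
  refine hne (hh.1.2 h' hh'.1.1 fun x hx => ?_).symm
  obtain hle | hle := hh.1.le_total hx hh.2
  · exact hh'.1.mem_of_le hle hh'.2
  · obtain rfl : m = x := not_not.1 fun hmx => hmax x hx ⟨hle, hmx⟩
    exact hh'.2

theorem exists_isHistory_of_isChain (hc : IsChain T.le c) : ∃ h, T.IsHistory h ∧ c ⊆ h := by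
  obtain ⟨h, hmax, hch⟩ := hc.exists_maxChain
  exact ⟨h, ⟨hmax.1, fun h' hh' hle => (hmax.2 hh' hle).symm⟩, hch⟩

theorem H_nonempty (m : Mo) : (T.H m).Nonempty := by
  obtain ⟨h, hh, hmh⟩ := T.exists_isHistory_of_isChain Set.subsingleton_singleton.isChain
  exact ⟨h, hh, hmh rfl⟩

end TemporalFrame

theorem JstitFrame.regular_of_exists_next {Mo Ag : Type} {F : JstitFrame Mo Ag}
    (hnext : ∀ m m1, F.toTemporalFrame.lt m m1 →
      ∃ m2, F.le m2 m1 ∧ F.toTemporalFrame.Next m m2) : F.Regular :=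
  fun m m1 hlt _ => hnext m m1 hlt

end TemporalFrames

section Soundness

namespace JstitModel

variable {Mo Ag PVar PConst PropVar : Type} {M : JstitModel Mo Ag PVar PConst PropVar}
variable {A B : Form Ag PVar PConst PropVar} {t : Pol PVar PConst} {m m' : Mo} {h h' : Set Mo}

theorem ActM_mono (hRe : M.Re m m') : M.ActM m ⊆ M.ActM m' :=
  fun t ht => M.transparent m m' t hRe ht

theorem act_eq_of_lt (hlt : M.toTemporalFrame.lt m m') (hh : h ∈ M.toTemporalFrame.H m')
    (hh' : h' ∈ M.toTemporalFrame.H m') : M.act m h = M.act m h' :=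
  M.divide m h h' (TemporalFrame.H_anti hlt.1 hh) (TemporalFrame.H_anti hlt.1 hh')
    ⟨m', hlt, hh.2, hh'.2⟩

theorem mem_ActM_of_lt (hlt : M.toTemporalFrame.lt m m') (hh : h ∈ M.toTemporalFrame.H m')
    (ht : t ∈ M.act m h) : t ∈ M.ActM m' :=
  fun h' hh' => M.expansion m' m h' hlt hh' (act_eq_of_lt hlt hh hh' ▸ ht)

theorem mem_act_of_next (hnext : M.toTemporalFrame.Next m m') (hh : h ∈ M.toTemporalFrame.H m')
    (ht : t ∈ M.ActM m') : t ∈ M.act m h := by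
  obtain ⟨m₀, h', hlt, hh', ht'⟩ := M.no_new m' t ht
  rw [act_eq_of_lt hnext.1 hh hh']
  obtain rfl | hne := eq_or_ne m₀ m
  · exact ht'
  · exact M.expansion m m₀ h' ⟨hnext.2 m₀ hlt, hne⟩ (TemporalFrame.H_anti hnext.1.1 hh') ht'

theorem setOf_mem_ActM_mem_Theta (ht : t ∈ M.ActM m) : {x | t ∈ M.ActM x} ∈ M.Theta m := by
  refine ⟨ht, fun _ _ hx hRe => ActM_mono hRe hx, fun m1 hnext h hh => ?_, fun m1 hm1 hdense => ?_⟩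
  · obtain ⟨m2, hm2, hnext, ht2⟩ := hnext h hh
    exact mem_act_of_next hnext ⟨hh.1, hm2⟩ ht2
  · obtain ⟨m2, h, hlt, hh, ht2⟩ := M.no_new m1 t hm1
    obtain ⟨m3, h23, h31⟩ := hdense m2 hlt
    exact ⟨m3, h31, mem_ActM_of_lt h23 (TemporalFrame.H_anti h31.1 hh) ht2⟩

theorem exists_next_of_mem_act (hreg : M.toJstitFrame.Regular)
    (hlt : M.toTemporalFrame.lt m m') (hh : h ∈ M.toTemporalFrame.H m')
    (hh' : h' ∈ M.toTemporalFrame.H m) (ht : t ∈ M.act m h) (ht' : t ∉ M.act m h') :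
    ∃ m2, M.le m2 m' ∧ M.toTemporalFrame.Next m m2 := by
  refine hreg m m' hlt ⟨{x | t ∈ M.ActM x}, fun m0 hlt0 hle0 => ?_, fun hm => ht' (hm h' hh'),
    h', hh', fun g hg hundiv => ?_, fun m2 hm2 hnext ht2 => ?_⟩
  · exact setOf_mem_ActM_mem_Theta (mem_ActM_of_lt hlt0 (TemporalFrame.H_anti hle0 hh) ht)
  · apply ht'
    rwa [M.divide m h' g hh' (TemporalFrame.H_anti hlt.1 hg) hundiv, act_eq_of_lt hlt hg hh]
  · exact ht' (mem_act_of_next hnext ⟨hh'.1, hm2⟩ ht2)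

theorem exists_mem_act_of_forall_ActM (hreg : M.toJstitFrame.Regular)
    {ts ss : Set (Pol PVar PConst)} (hh : h ∈ M.toTemporalFrame.H m)
    (himp : ∀ m', M.le m m' → ts ⊆ M.ActM m' → ∃ s ∈ ss, s ∈ M.ActM m')
    (hts : ts ⊆ M.act m h) : ∃ s ∈ ss, s ∈ M.act m h := by
  by_cases hset : ts ⊆ M.ActM m
  · obtain ⟨s, hs, hsm⟩ := himp m (M.le_refl m) hset
    exact ⟨s, hs, hsm h hh⟩
  obtain ⟨t, ht, htm⟩ := Set.not_subset.1 hset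
  obtain ⟨h', hh', hth'⟩ : ∃ h' ∈ M.toTemporalFrame.H m, t ∉ M.act m h' := by
    simpa [ActM] using htm
  have hne : h ≠ h' := fun heq => hth' (heq ▸ hts ht)
  obtain ⟨m1, hm1, hlt⟩ := TemporalFrame.exists_lt_mem_of_ne hh hh' hne
  obtain ⟨m2, hle, hnext⟩ := exists_next_of_mem_act hreg hlt ⟨hh.1, hm1⟩ hh' (hts ht) hth'
  have hh2 : h ∈ M.toTemporalFrame.H m2 := ⟨hh.1, hh.1.mem_of_le hle hm1⟩
  obtain ⟨s, hs, hsm⟩ := himp m2 hnext.1.1 fun t ht => mem_ActM_of_lt hnext.1 hh2 (hts ht)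
  exact ⟨s, hs, mem_act_of_next hnext hh2 hsm⟩

theorem sat_imp : M.Sat (A.imp B) m h ↔ (M.Sat A m h → M.Sat B m h) := by
  simp only [Form.imp, Sat, not_and_not_right]

theorem sat_or : M.Sat (A.or B) m h ↔ M.Sat A m h ∨ M.Sat B m h := by
  simp only [Form.or, Sat]
  tauto

theorem sat_dia : M.Sat A.dia m h ↔ ∃ h' ∈ M.toTemporalFrame.H m, M.Sat A m h' := by
  simp only [Form.dia, Sat, not_forall, not_not, exists_prop]

theorem not_sat_bot [Inhabited PropVar] : ¬ M.Sat Form.bot m h := by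
  simp only [Form.bot, Sat, and_not_self, not_false_iff]

theorem sat_andList {L : List (Form Ag PVar PConst PropVar)} :
    M.Sat (andList A L) m h ↔ ∀ B ∈ A :: L, M.Sat B m h := by
  induction L generalizing A with
  | nil => simp [andList]
  | cons B L ih => rw [andList, Sat, ih, List.forall_mem_cons (a := A)]

theorem sat_bigOr [Inhabited PropVar] {L : List (Form Ag PVar PConst PropVar)} :
    M.Sat (bigOr L) m h ↔ ∃ B ∈ L, M.Sat B m h := by
  induction L with
  | nil => simp [bigOr, not_sat_bot]
  | cons A L ih =>
    cases L with
    | nil => simp [bigOr]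
    | cons B L => rw [bigOr, sat_or, ih, List.exists_mem_cons_iff (a := A)]

theorem sat_stit_iff {j : Ag} {C : Set (Set Mo)} (hC : C ∈ M.choice m j) (hh : h ∈ C) :
    M.Sat (A.stit j) m h ↔ ∀ h' ∈ C, M.Sat A m h' := by
  refine ⟨fun hA h' hh' => hA h' C hC hh hh', fun hA h' C' hC' hhC' hh' => hA h' ?_⟩
  rwa [M.choice_disjoint m j C C' hC hC' ⟨h, hh, hhC'⟩]

theorem valid_of_tautology (hA : Tautology A) : M.Valid A := by
  classical
  intro m h _
  have hv := hA (fun B => decide (M.Sat B m h))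
    (fun _ _ => (decide_eq_decide.2 Iff.rfl).trans (Bool.decide_and _ _))
    (fun _ => (decide_eq_decide.2 Iff.rfl).trans decide_not)
  simpa using hv

theorem exists_choice_forall_sat {P : List (Ag × Form Ag PVar PConst PropVar)}
    (hP : (P.map Prod.fst).Nodup)
    (hsat : ∀ q ∈ P, ∃ h ∈ M.toTemporalFrame.H m, M.Sat (q.2.stit q.1) m h) (j : Ag) :
    ∃ C ∈ M.choice m j, ∀ A, (j, A) ∈ P → ∀ h ∈ C, M.Sat A m h := by
  by_cases hj : ∃ A, (j, A) ∈ P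
  · obtain ⟨A, hA⟩ := hj
    obtain ⟨h, hh, hAh⟩ := hsat _ hA
    obtain ⟨C, hC, hhC⟩ := M.choice_cover m j h hh
    refine ⟨C, hC, fun B hB => ?_⟩
    obtain rfl : A = B := congrArg Prod.snd (List.inj_on_of_nodup_map hP hA hB rfl)
    exact (sat_stit_iff hC hhC).1 hAh
  · obtain ⟨h, hh⟩ := TemporalFrame.H_nonempty (T := M.toTemporalFrame) m
    obtain ⟨C, hC, -⟩ := M.choice_cover m j h hh
    exact ⟨C, hC, fun A hA => absurd ⟨A, hA⟩ hj⟩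

theorem exists_forall_sat_stit [Nonempty Ag] {P : List (Ag × Form Ag PVar PConst PropVar)}
    (hP : (P.map Prod.fst).Nodup)
    (hsat : ∀ q ∈ P, ∃ h ∈ M.toTemporalFrame.H m, M.Sat (q.2.stit q.1) m h) :
    ∃ h ∈ M.toTemporalFrame.H m, ∀ q ∈ P, M.Sat (q.2.stit q.1) m h := by
  choose f hf hfsat using exists_choice_forall_sat hP hsat
  obtain ⟨h, hh⟩ := M.independence m f hf
  rw [Set.mem_iInter] at hh
  exact ⟨h, M.choice_cell_sub m _ _ (hf (Classical.arbitrary Ag)) (hh _),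
    fun q hq => (sat_stit_iff (hf q.1) (hh q.1)).2 (hfsat q.1 q.2 hq)⟩

theorem valid_of_ax (hA : Ax A) : M.Valid A := by
  intro m h hh
  induction hA with
  | a0 hA => exact valid_of_tautology hA m h hh
  | boxK | stitK | knowK => simp only [sat_imp, Sat]; grind
  | boxT => exact sat_imp.2 fun hA => hA h hh
  | box4 => exact sat_imp.2 fun hA _ _ => hA
  | box5 => exact sat_imp.2 fun hA _ _ => hA
  | @stitT j A =>
    obtain ⟨C, hC, hhC⟩ := M.choice_cover m j h hh
    exact sat_imp.2 fun hA => hA h C hC hhC hhC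
  | @stit4 j A =>
    exact sat_imp.2 fun hA _ C hC hhC hh' => (sat_stit_iff hC hh').2 ((sat_stit_iff hC hhC).1 hA)
  | @stit5 j A =>
    exact sat_imp.2 fun hA _ C hC hhC hh' hA' =>
      hA ((sat_stit_iff hC hhC).2 ((sat_stit_iff hC hh').1 hA'))
  | a2 => exact sat_imp.2 fun hA h' C hC _ hh' => hA h' (M.choice_cell_sub m _ C hC hh')
  | @a3 p L hP =>
    have : Nonempty Ag := ⟨p.1⟩
    simp only [sat_imp, sat_dia, sat_andList, List.forall_mem_cons, List.forall_mem_map]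
    intro hsat
    simpa using exists_forall_sat_stit hP (by simpa [sat_dia] using hsat)
  | a4 =>
    simp only [sat_imp, Sat]
    exact fun ⟨hAB, hAB'⟩ ⟨hA, hA'⟩ => ⟨M.ev_app _ _ _ _ _ hAB hA,
      fun m' h' hRe hh' => hAB' m' h' hRe hh' (hA' m' h' hRe hh')⟩
  | a5 =>
    refine sat_imp.2 fun ⟨hA, hA'⟩ => ⟨⟨M.ev_bang m _ _ hA, fun m' h' hRe _ =>
      ⟨M.ev_mono m m' _ hRe hA, fun m'' h'' hRe' => hA' m'' h'' (M.Re_trans hRe hRe')⟩⟩,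
      fun m' h' hR => hA' m' h' (M.R_sub_Re hR)⟩
  | a6 =>
    refine sat_imp.2 fun hA => (sat_or.1 hA).elim ?_ ?_
    · exact fun hA => ⟨M.ev_sum_left m _ _ hA.1, hA.2⟩
    · exact fun hA => ⟨M.ev_sum_right m _ _ hA.1, hA.2⟩
  | knowT => exact sat_imp.2 fun hA => hA m h (M.R_refl m) hh
  | know4 => exact sat_imp.2 fun hA _ _ hR _ m'' h'' hR' => hA m'' h'' (M.R_trans hR hR')
  | a8 => exact sat_imp.2 fun hA _ _ m' h' hR _ h'' hh'' => hA m' h'' hR hh''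
  | a9 => exact sat_imp.2 fun ht m' h' hR _ => ActM_mono (M.R_sub_Re hR) ht

variable {CS : Set (Form Ag PVar PConst PropVar)}

theorem valid_of_mem_constSpec (hCS : IsConstSpec CS) (hnorm : CSNormal CS M) (hA : A ∈ CS) :
    M.Valid A := by
  induction hCS.1 A hA with
  | @base c A hax => exact fun m h _ => ⟨hnorm c m A hA, fun m' h' _ => valid_of_ax hax m' h'⟩
  | @step c B hB ih =>
    have hBCS : B ∈ CS := by
      cases hB with
      | base => exact hCS.2 _ _ _ hA
      | step => exact hCS.2 _ _ _ hA
    exact fun m h _ => ⟨hnorm c m B hA, fun m' h' _ => ih hBCS m' h'⟩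

theorem valid_of_proves [Inhabited PropVar] (hCS : IsConstSpec CS) (hnorm : CSNormal CS M)
    (hreg : M.toJstitFrame.Regular) (hA : Proves CS A) : M.Valid A := by
  induction hA with
  | ax hax => exact valid_of_ax hax
  | mp _ _ ihAB ihA => exact fun m h hh => sat_imp.1 (ihAB m h hh) (ihA m h hh)
  | nec _ ih => exact fun _ _ _ m' h' _ => ih m' h'
  | @rd A ts ss _ _ ih =>
    intro m h hh
    refine sat_imp.2 fun hA => sat_bigOr.2 ?_
    by_contra! hnone
    simp only [List.forall_mem_append, List.forall_mem_map, Sat, not_not] at hnone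
    have himp (m' : Mo) (hle : M.le m m') (hts : {t | t ∈ ts} ⊆ M.ActM m') :
        ∃ s ∈ {s | s ∈ ss}, s ∈ M.ActM m' := by
      obtain ⟨h', hh'⟩ := TemporalFrame.H_nonempty (T := M.toTemporalFrame) m'
      have hKA : M.Sat A.know m' h' := fun m'' h'' hR => hA m'' h'' (M.R_trans (M.le_sub_R hle) hR)
      obtain ⟨B, hB, hBsat⟩ := sat_bigOr.1 (sat_imp.1 (ih m' h' hh') hKA)
      obtain hB | hB := List.mem_append.1 hB <;> obtain ⟨t, ht, rfl⟩ := List.mem_map.1 hB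
      · exact absurd (hts ht) hBsat
      · exact ⟨t, ht, hBsat⟩
    obtain ⟨s, hs, hsm⟩ := exists_mem_act_of_forall_ActM hreg hh himp hnone.1
    exact hnone.2 s hs hsm
  | rcs hB => exact valid_of_mem_constSpec hCS hnorm hB

end JstitModel

end Soundness

section Unravelling

namespace TemporalFrame

/-- The tree of finite words over `α`, ordered by the suffix relation: `a :: m` is the moment
reached from `m` by the letter `a`, so a history is an infinite word read from right to left. -/
def wordTree (α : Type) : TemporalFrame (List α) where
  le m m' := m <:+ m'
  le_refl := List.suffix_refl
  le_antisymm h h' := h.eq_of_length_le h'.length_le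
  le_trans := List.IsSuffix.trans
  nonempty := ⟨[]⟩
  hist_conn _ _ := ⟨[], List.nil_suffix, List.nil_suffix⟩
  no_backward _ _ _ := List.suffix_or_suffix_of_suffix

variable {α : Type} {m m' : List α} {h g : Set (List α)}

theorem wordTree_next_cons (a : α) (m : List α) : (wordTree α).Next m (a :: m) := by
  refine ⟨⟨List.suffix_cons a m, (List.cons_ne_self a m).symm⟩, fun m' hm' => ?_⟩
  exact (List.suffix_cons_iff.1 hm'.1).resolve_left hm'.2

theorem exists_cons_le_of_wordTree_lt (hlt : (wordTree α).lt m m') :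
    ∃ a, (wordTree α).le (a :: m) m' := by
  obtain ⟨⟨p, rfl⟩, hne⟩ := hlt
  obtain ⟨q, a, rfl⟩ : ∃ q a, p = q ++ [a] :=
    (List.eq_nil_or_concat' p).resolve_left fun hp => hne (by simp [hp])
  exact ⟨a, q, by simp⟩

theorem exists_cons_mem_of_mem_H [Nonempty α] (hh : h ∈ (wordTree α).H m) :
    ∃ a, a :: m ∈ h := by
  by_contra! hnone
  obtain ⟨a⟩ := ‹Nonempty α›
  refine hnone a (hh.1.mem_of_comparable fun x hx => .inr ?_)
  obtain hle | hle := hh.1.le_total hx hh.2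
  · exact (wordTree α).le_trans hle (List.suffix_cons a m)
  · obtain rfl | hne := eq_or_ne m x
    · exact List.suffix_cons a m
    · obtain ⟨b, hb⟩ := exists_cons_le_of_wordTree_lt ⟨hle, hne⟩
      exact absurd (hh.1.mem_of_le hb hx) (hnone b)

/-- The letter by which the history `h` leaves the moment `m`; a junk value if `h` does not pass
through `m`. -/
noncomputable def nextLetter [Nonempty α] (h : Set (List α)) (m : List α) : α :=
  Classical.epsilon fun a => a :: m ∈ h

variable [Nonempty α]

theorem nextLetter_cons_mem (hh : h ∈ (wordTree α).H m) : nextLetter h m :: m ∈ h :=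
  Classical.epsilon_spec (exists_cons_mem_of_mem_H hh)

theorem nextLetter_eq {a : α} (hh : h ∈ (wordTree α).H (a :: m)) : nextLetter h m = a := by
  have hcons := nextLetter_cons_mem (H_anti (List.suffix_cons a m) hh)
  have heq : nextLetter h m :: m = a :: m := (hh.1.le_total hcons hh.2).elim
    (fun hle => hle.eq_of_length rfl) fun hle => (hle.eq_of_length rfl).symm
  exact (List.cons_eq_cons.1 heq).1

theorem nextLetter_eq_of_undiv (hh : h ∈ (wordTree α).H m) (hg : g ∈ (wordTree α).H m)
    (hundiv : (wordTree α).Undiv m h g) : nextLetter h m = nextLetter g m := by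
  obtain ⟨m', hlt, hmh, hmg⟩ := hundiv
  obtain ⟨a, ha⟩ := exists_cons_le_of_wordTree_lt hlt
  rw [nextLetter_eq ⟨hh.1, hh.1.mem_of_le ha hmh⟩, nextLetter_eq ⟨hg.1, hg.1.mem_of_le ha hmg⟩]

theorem exists_nextLetter_eq (m : List α) (a : α) :
    ∃ h ∈ (wordTree α).H m, nextLetter h m = a := by
  obtain ⟨h, hh⟩ := (wordTree α).H_nonempty (a :: m)
  exact ⟨h, H_anti (List.suffix_cons a m) hh, nextLetter_eq hh⟩

theorem forall_nextLetter_iff {P : α → Prop} :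
    (∀ h ∈ (wordTree α).H m, P (nextLetter h m)) ↔ ∀ a, P a := by
  refine ⟨fun hP a => ?_, fun hP h _ => hP _⟩
  obtain ⟨h, hh, rfl⟩ := exists_nextLetter_eq m a
  exact hP h hh

end TemporalFrame

open TemporalFrame

/-- A deterministic transition system whose unravelling into the tree of words over `α` is a
unirelational jstit frame: letters are the histories through a state up to undividedness, and
`agree j s` is the choice partition of agent `j` at the state `s`. -/
structure TransitionFrame (S α Ag : Type) where
  /-- The state of the root moment. -/
  init : S
  step : S → α → S
  agree : Ag → S → α → α → Prop
  /-- The common epistemic preorder. -/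
  rel : S → S → Prop
  agree_equiv : ∀ j s, Equivalence (agree j s)
  exists_agree : ∀ s (f : Ag → α), ∃ a, ∀ j, agree j s (f j) a
  rel_refl : ∀ s, rel s s
  rel_trans : ∀ {s s' s''}, rel s s' → rel s' s'' → rel s s''
  rel_step : ∀ s a, rel s (step s a)

namespace TransitionFrame

variable {S α Ag : Type} (F : TransitionFrame S α Ag)

/-- The state reached from the initial one by reading the word `m` from right to left. -/
def run : List α → S :=
  List.foldr (fun a s => F.step s a) F.init

theorem rel_run {m m' : List α} (hle : m <:+ m') : F.rel (F.run m) (F.run m') := by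
  induction m' with
  | nil => rw [List.suffix_nil.1 hle]; exact F.rel_refl _
  | cons a m' ih =>
    obtain rfl | hle := List.suffix_cons_iff.1 hle
    · exact F.rel_refl _
    · exact F.rel_trans (ih hle) (F.rel_step _ a)

variable [Nonempty α]

/-- The choice cells of an unravelling: histories are classified by their next letter. -/
def cell (m : List α) (j : Ag) (a : α) : Set (Set (List α)) :=
  {h ∈ (wordTree α).H m | F.agree j (F.run m) a (nextLetter h m)}

theorem cell_eq_of_mem {m : List α} {j : Ag} {a : α} {h : Set (List α)} (hh : h ∈ F.cell m j a) :
    F.cell m j a = F.cell m j (nextLetter h m) := by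
  have hequiv := F.agree_equiv j (F.run m)
  ext g
  exact and_congr_right fun _ =>
    ⟨fun hg => hequiv.trans (hequiv.symm hh.2) hg, fun hg => hequiv.trans hh.2 hg⟩

/-- The unravelling of a transition system into a stit frame. -/
def toStitFrame : StitFrame (List α) Ag where
  toTemporalFrame := wordTree α
  choice m j := Set.range (F.cell m j)
  choice_cell_nonempty := by
    rintro m j _ ⟨a, rfl⟩
    obtain ⟨h, hh, rfl⟩ := exists_nextLetter_eq m a
    exact ⟨h, hh, (F.agree_equiv j _).refl _⟩
  choice_cell_sub := by
    rintro m j _ ⟨a, rfl⟩ h hh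
    exact hh.1
  choice_cover m j h hh := ⟨_, ⟨nextLetter h m, rfl⟩, hh, (F.agree_equiv j _).refl _⟩
  choice_disjoint := by
    rintro m j _ _ ⟨a, rfl⟩ ⟨b, rfl⟩ ⟨h, ha, hb⟩
    rw [F.cell_eq_of_mem ha, F.cell_eq_of_mem hb]
  no_choice_undiv := by
    rintro m j h h' hh hh' hundiv _ ⟨a, rfl⟩ ha
    exact ⟨hh', nextLetter_eq_of_undiv hh hh' hundiv ▸ ha.2⟩
  independence m f hf := by
    choose a ha using hf
    obtain ⟨b, hb⟩ := F.exists_agree (F.run m) a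
    obtain ⟨h, hh, rfl⟩ := exists_nextLetter_eq m b
    exact ⟨h, Set.mem_iInter.2 fun j => ha j ▸ ⟨hh, hb j⟩⟩

/-- The unravelling of a transition system into a jstit frame, with `R = R_e`. -/
def toJstitFrame : JstitFrame (List α) Ag where
  toStitFrame := F.toStitFrame
  R m m' := F.rel (F.run m) (F.run m')
  Re m m' := F.rel (F.run m) (F.run m')
  R_refl _ := F.rel_refl _
  R_trans := F.rel_trans
  Re_refl _ := F.rel_refl _
  Re_trans := F.rel_trans
  R_sub_Re := id
  le_sub_R := F.rel_run

theorem regular_toJstitFrame : F.toJstitFrame.Regular :=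
  JstitFrame.regular_of_exists_next fun m _ hlt =>
    let ⟨a, ha⟩ := exists_cons_le_of_wordTree_lt hlt
    ⟨a :: m, ha, wordTree_next_cons a m⟩

theorem unirelational_toJstitFrame : F.toJstitFrame.Unirelational :=
  fun _ _ => id

end TransitionFrame

/-- A transition system with the data needed to make its unravelling a jstit model. By `act_iff` a
letter presents exactly the proofs that are settled in the next state, which is what the
constraints on presented proofs amount to on a discrete tree. -/
structure TransitionModel (S α Ag PVar PConst PropVar : Type) extends TransitionFrame S α Ag where
  act : S → α → Set (Pol PVar PConst)
  ev : S → Pol PVar PConst → Set (Form Ag PVar PConst PropVar)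
  val : PropVar → S → Set α
  act_iff : ∀ s a t, t ∈ act s a ↔ ∀ b, t ∈ act (step s a) b
  exists_notMem_act_init : ∀ t, ∃ a, t ∉ act init a
  act_rel : ∀ s s' t, rel s s' → (∀ a, t ∈ act s a) → ∀ a, t ∈ act s' a
  ev_rel : ∀ s s' t, rel s s' → ev s t ⊆ ev s' t
  ev_app : ∀ s t t' A B, Form.imp A B ∈ ev s t → A ∈ ev s t' → B ∈ ev s (Pol.times t t')
  ev_sum_left : ∀ s t t', ev s t ⊆ ev s (Pol.plus t t')
  ev_sum_right : ∀ s t t', ev s t' ⊆ ev s (Pol.plus t t')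
  ev_bang : ∀ s t A, A ∈ ev s t → Form.proves t A ∈ ev s (Pol.bang t)

namespace TransitionModel

variable {S α Ag PVar PConst PropVar : Type} [Nonempty α]
variable (N : TransitionModel S α Ag PVar PConst PropVar)

theorem act_run_subset {m m' : List α} {h : Set (List α)} (hle : m' <:+ m)
    (hh : h ∈ (wordTree α).H m) :
    N.act (N.run m') (nextLetter h m') ⊆ N.act (N.run m) (nextLetter h m) := by
  induction m with
  | nil => rw [List.suffix_nil.1 hle]
  | cons a m ih =>
    obtain rfl | hle := List.suffix_cons_iff.1 hle
    · exact subset_rfl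
    · refine (ih hle (H_anti (List.suffix_cons a m) hh)).trans fun t ht => ?_
      rw [nextLetter_eq hh] at ht
      exact (N.act_iff (N.run m) a t).1 ht _

/-- The unravelling of a transition model into a jstit model. -/
def toJstitModel : JstitModel (List α) Ag PVar PConst PropVar where
  toJstitFrame := N.toTransitionFrame.toJstitFrame
  act m h := N.act (N.run m) (nextLetter h m)
  ev m := N.ev (N.run m)
  val p := {x | nextLetter x.2 x.1 ∈ N.val p (N.run x.1)}
  ev_mono _ _ t := N.ev_rel _ _ t
  ev_app _ := N.ev_app _
  ev_sum_left _ := N.ev_sum_left _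
  ev_sum_right _ := N.ev_sum_right _
  ev_bang _ := N.ev_bang _
  expansion _ _ _ hlt hh := N.act_run_subset hlt.1 hh
  no_new := by
    rintro (_ | ⟨a, m⟩) t ht
    · obtain ⟨a, ha⟩ := N.exists_notMem_act_init t
      exact (ha (forall_nextLetter_iff (P := (t ∈ N.act N.init ·)) |>.1 ht a)).elim
    · obtain ⟨h, hh⟩ := (wordTree α).H_nonempty (a :: m)
      refine ⟨m, h, (wordTree_next_cons a m).1, hh, ?_⟩
      rw [nextLetter_eq hh]
      exact (N.act_iff _ a t).2 (forall_nextLetter_iff.1 ht)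
  divide m h h' hh hh' hundiv := by rw [nextLetter_eq_of_undiv hh hh' hundiv]
  transparent _ _ t hrel ht _ _ := N.act_rel _ _ t hrel (forall_nextLetter_iff.1 ht) _

end TransitionModel

end Unravelling

section CanonicalModel

variable {Ag PVar PConst PropVar : Type} [Inhabited PropVar]
variable {CS : Set (Form Ag PVar PConst PropVar)} {A B : Form Ag PVar PConst PropVar}

namespace World

open Classical in
/-- The world chosen by a letter at a moment with world `w`: letters outside the `□`-class of `w`
are redirected to `w`, so that every letter is available at every moment. -/
noncomputable def resolve (w : World CS) : Option (World CS) → World CS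
  | none => w
  | some v => if w.AgreeOn Form.box v then v else w

variable {w v : World CS}

theorem resolve_some (h : w.AgreeOn Form.box v) : w.resolve (some v) = v :=
  if_pos h

theorem agreeOn_resolve (w : World CS) (o : Option (World CS)) :
    w.AgreeOn Form.box (w.resolve o) := by
  obtain _ | v := o
  · exact .refl w
  · by_cases h : w.AgreeOn Form.box v
    · rwa [resolve_some h]
    · rw [resolve, if_neg h]

theorem box_mem_iff_forall_resolve : A.box ∈ w ↔ ∀ o, A ∈ w.resolve o :=
  ⟨fun hA o => (isS5Modality_box CS).mem_of_agreeOn hA (w.agreeOn_resolve o),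
    fun h => (isS5Modality_box CS).mem_iff.2 fun v hv => resolve_some hv ▸ h (some v)⟩

theorem stit_mem_resolve_iff {j : Ag} {o : Option (World CS)} :
    A.stit j ∈ w.resolve o ↔
      ∀ o', (w.resolve o).AgreeOn (Form.stit j) (w.resolve o') → A ∈ w.resolve o' := by
  refine ⟨fun hA o' h => (isS5Modality_stit CS j).mem_of_agreeOn hA h,
    fun h => (isS5Modality_stit CS j).mem_iff.2 fun v hv => ?_⟩
  have hw : w.resolve (some v) = v := resolve_some ((w.agreeOn_resolve o).trans hv.box_of_stit)
  rw [← hw] at hv ⊢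
  exact h _ hv

/-- A world describing the next moment: it settles exactly the proofs presented in `w`. Its
existence is where the rule `R_D` enters. -/
noncomputable def succ (w : World CS) : World CS :=
  w.exists_accessible_box_ann_mem_iff.choose

theorem accessible_succ (w : World CS) : w.Accessible w.succ :=
  w.exists_accessible_box_ann_mem_iff.choose_spec.1

theorem box_ann_mem_succ_iff (w : World CS) (t : Pol PVar PConst) :
    (Form.ann t).box ∈ w.succ ↔ Form.ann t ∈ w :=
  w.exists_accessible_box_ann_mem_iff.choose_spec.2 t

end World

/-- The states of the canonical model. From `root` a letter either enters a world or the branch of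
`idle` states, where nothing is ever presented; the latter keeps `Act_m` empty at the root. -/
inductive CanonicalState (CS : Set (Form Ag PVar PConst PropVar)) : Type
  | root
  | idle
  | live (w : World CS)

namespace CanonicalState

/-- The transitions of the canonical model. -/
noncomputable def step : CanonicalState CS → Option (World CS) → CanonicalState CS
  | root, none => idle
  | root, some w => live w
  | idle, _ => idle
  | live w, o => live (w.resolve o).succ

/-- Two letters are equivalent for `j` if the worlds they choose agree on the formulas `[j]A`. -/
def Agree (j : Ag) : CanonicalState CS → Option (World CS) → Option (World CS) → Prop
  | live w, o, o' => (w.resolve o).AgreeOn (Form.stit j) (w.resolve o')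
  | _, _, _ => True

/-- The epistemic accessibility relation between states. -/
inductive Rel : CanonicalState CS → CanonicalState CS → Prop
  | root (s) : Rel root s
  | idle : Rel idle idle
  | live {w v} : w.Accessible v → Rel (live w) (live v)

/-- The proofs presented at a state under a given letter. At `root` it is the world about to be
entered that decides. -/
def act : CanonicalState CS → Option (World CS) → Set (Pol PVar PConst)
  | root, some w => {t | (Form.ann t).box ∈ w}
  | live w, o => {t | Form.ann t ∈ w.resolve o}
  | _, _ => ∅

/-- The worlds that constrain the evidence available at a state. -/
def worlds : CanonicalState CS → Set (World CS)
  | root => Set.univ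
  | idle => ∅
  | live w => {w}

/-- The evidence of the canonical model: `t` is evidence for `A` if `t:A` holds in every relevant
world. -/
def ev (s : CanonicalState CS) (t : Pol PVar PConst) : Set (Form Ag PVar PConst PropVar) :=
  {A | ∀ w ∈ s.worlds, A.proves t ∈ w}

theorem Rel.refl (s : CanonicalState CS) : s.Rel s := by
  obtain _ | _ | w := s
  exacts [.root _, .idle, .live (.refl w)]

theorem Rel.trans {s s' s'' : CanonicalState CS} (h : s.Rel s') (h' : s'.Rel s'') : s.Rel s'' := by
  cases h with
  | root => exact .root _
  | idle => exact h'
  | live h => cases h' with | live h' => exact .live (h.trans h')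

theorem rel_step (s : CanonicalState CS) (o : Option (World CS)) : s.Rel (s.step o) := by
  obtain _ | _ | w := s
  exacts [.root _, .idle, .live ((w.agreeOn_resolve o).accessible.trans (World.accessible_succ _))]

theorem agree_equivalence (j : Ag) (s : CanonicalState CS) : Equivalence (Agree j s) := by
  obtain _ | _ | w := s
  exacts [⟨fun _ => trivial, fun _ => trivial, fun _ _ => trivial⟩,
    ⟨fun _ => trivial, fun _ => trivial, fun _ _ => trivial⟩,
    ⟨fun _ => .refl _, fun h => h.symm, fun h h' => h.trans h'⟩]

theorem exists_agree (s : CanonicalState CS) (f : Ag → Option (World CS)) :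
    ∃ o, ∀ j, Agree j s (f j) o := by
  obtain _ | _ | w := s
  · exact ⟨none, fun _ => trivial⟩
  · exact ⟨none, fun _ => trivial⟩
  · obtain ⟨v, hv, hfv⟩ := World.exists_agreeOn_stit (fun j => w.resolve (f j))
      fun j => w.agreeOn_resolve (f j)
    refine ⟨some v, fun j => ?_⟩
    rw [Agree, World.resolve_some hv]
    exact hfv j

theorem mem_act_iff (s : CanonicalState CS) (o : Option (World CS)) (t : Pol PVar PConst) :
    t ∈ s.act o ↔ ∀ o', t ∈ (s.step o).act o' := by
  obtain _ | _ | w := s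
  · obtain _ | w := o
    · exact (forall_const _).symm
    · exact World.box_mem_iff_forall_resolve
  · exact (forall_const _).symm
  · exact ((w.resolve o).box_ann_mem_succ_iff t).symm.trans World.box_mem_iff_forall_resolve

theorem mem_act_of_rel {s s' : CanonicalState CS} {t : Pol PVar PConst} (h : s.Rel s')
    (ht : ∀ o, t ∈ s.act o) (o : Option (World CS)) : t ∈ s'.act o := by
  cases h with
  | root => exact (ht none).elim
  | idle => exact ht o
  | live h =>
    exact World.box_mem_iff_forall_resolve.1
      (h.box_ann_mem (World.box_mem_iff_forall_resolve.2 ht)) o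

theorem exists_accessible_of_rel {s s' : CanonicalState CS} (h : s.Rel s') {v : World CS}
    (hv : v ∈ s'.worlds) : ∃ w ∈ s.worlds, w.Accessible v := by
  cases h with
  | root => exact ⟨v, Set.mem_univ v, .refl v⟩
  | idle => exact hv.elim
  | live h => exact ⟨_, rfl, (Set.mem_singleton_iff.1 hv) ▸ h⟩

end CanonicalState

/-- The canonical transition model: the letters are the worlds, with `none` standing for the world
of the current moment. -/
noncomputable def canonicalModel (CS : Set (Form Ag PVar PConst PropVar)) :
    TransitionModel (CanonicalState CS) (Option (World CS)) Ag PVar PConst PropVar where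
  init := .root
  step := .step
  agree := CanonicalState.Agree
  rel := CanonicalState.Rel
  agree_equiv := CanonicalState.agree_equivalence
  exists_agree := CanonicalState.exists_agree
  rel_refl := .refl
  rel_trans := .trans
  rel_step := CanonicalState.rel_step
  act := CanonicalState.act
  ev := CanonicalState.ev
  val p s := match s with
    | .live w => {o | Form.pv p ∈ w.resolve o}
    | _ => ∅
  act_iff := CanonicalState.mem_act_iff
  exists_notMem_act_init _ := ⟨none, id⟩
  act_rel _ _ _ := CanonicalState.mem_act_of_rel
  ev_rel _ _ _ h _ hA _ hv :=
    let ⟨w, hw, hwv⟩ := CanonicalState.exists_accessible_of_rel h hv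
    hwv.proves_mem (hA w hw)
  ev_app _ _ _ _ _ hAB hA w hw := World.imp_mem_iff.1
    (World.mem_of_imp (.ax .a4) (hAB w hw)) (hA w hw)
  ev_sum_left _ _ _ _ hA w hw :=
    World.mem_of_imp (.ax .a6) (World.or_mem_iff.2 (.inl (hA w hw)))
  ev_sum_right _ _ _ _ hA w hw :=
    World.mem_of_imp (.ax .a6) (World.or_mem_iff.2 (.inr (hA w hw)))
  ev_bang _ _ _ hA w hw := (World.and_mem_iff.1 (World.mem_of_imp (.ax .a5) (hA w hw))).1

open TemporalFrame

theorem csNormal_canonicalModel (CS : Set (Form Ag PVar PConst PropVar)) :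
    CSNormal CS (canonicalModel CS).toJstitModel :=
  fun _ _ _ hA _ _ => World.mem_of_proves (.rcs hA)

/-- The truth lemma for `A`: at a moment of the canonical model whose state is the world `w`, truth
of `A` under a history is membership in the world chosen by the next letter of that history. -/
def TruthAt (CS : Set (Form Ag PVar PConst PropVar)) (A : Form Ag PVar PConst PropVar) : Prop :=
  ∀ ⦃m w⦄, (canonicalModel CS).run m = .live w → ∀ ⦃h⦄, h ∈ (wordTree _).H m →
    ((canonicalModel CS).toJstitModel.Sat A m h ↔ A ∈ w.resolve (nextLetter h m))

theorem World.exists_sat_iff_mem (w : World CS) :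
    ∃ (m : List (Option (World CS))) (h : Set (List (Option (World CS)))),
      (canonicalModel CS).run m = .live w ∧ h ∈ (wordTree _).H m ∧
      ∀ A, TruthAt CS A → ((canonicalModel CS).toJstitModel.Sat A m h ↔ A ∈ w) := by
  obtain ⟨h, hh, hnone⟩ := exists_nextLetter_eq [some w] none
  refine ⟨[some w], h, rfl, hh, fun A hA => ?_⟩
  rw [hA rfl hh, hnone, resolve]

namespace TruthAt

theorem box (hA : TruthAt CS A) : TruthAt CS A.box := by
  intro m w hm h _
  rw [← w.agreeOn_resolve, World.box_mem_iff_forall_resolve, ← forall_nextLetter_iff (m := m)]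
  exact forall₂_congr fun h' hh' => hA hm hh'

theorem stit (j : Ag) (hA : TruthAt CS A) : TruthAt CS (A.stit j) := by
  intro m w hm h hh
  have hcell (h' : Set (List (Option (World CS)))) :
      h' ∈ (canonicalModel CS).cell m j (nextLetter h m) ↔ h' ∈ (wordTree _).H m ∧
        (w.resolve (nextLetter h m)).AgreeOn (Form.stit j) (w.resolve (nextLetter h' m)) := by
    rw [TransitionFrame.cell, hm]
    rfl
  have hmem := (hcell h).2 ⟨hh, .refl _⟩
  rw [JstitModel.sat_stit_iff (M := (canonicalModel CS).toJstitModel) (Set.mem_range_self _) hmem,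
    World.stit_mem_resolve_iff, ← forall_nextLetter_iff (m := m)]
  refine forall_congr' fun h' => ?_
  rw [hcell, and_imp]
  exact forall₂_congr fun hh' _ => hA hm hh'

theorem know (hA : TruthAt CS A) : TruthAt CS A.know := by
  intro m w hm h _
  have hagree := w.agreeOn_resolve (nextLetter h m)
  constructor
  · intro hsat
    refine hagree.accessible _ (World.know_mem_iff.2 fun v hv => ?_)
    obtain ⟨m', h', hm', hh', hiff⟩ := v.exists_sat_iff_mem
    have hrel : CanonicalState.Rel ((canonicalModel CS).run m) ((canonicalModel CS).run m') := by
      rw [hm, hm']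
      exact .live hv
    exact (hiff A hA).1 (hsat m' h' hrel hh')
  · intro hknow m' h' (hrel : CanonicalState.Rel _ _) hh'
    generalize hm' : (canonicalModel CS).run m' = s at hrel
    rw [hm] at hrel
    cases hrel with | @live _ v hv =>
    have hagree' := v.agreeOn_resolve (nextLetter h' m')
    have hacc := (hagree.symm.accessible.trans hv).trans hagree'.accessible
    exact (hA hm' hh').2 (hacc.mem hknow)

theorem proves (t : Pol PVar PConst) (hA : TruthAt CS A) : TruthAt CS (A.proves t) := by
  intro m w hm h hh
  have hagree := w.agreeOn_resolve (nextLetter h m)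
  have hev : A ∈ (canonicalModel CS).toJstitModel.ev m t ↔
      A.proves t ∈ w.resolve (nextLetter h m) := by
    change A ∈ ((canonicalModel CS).run m).ev t ↔ _
    rw [hm]
    exact ⟨fun hw => hagree.accessible.proves_mem (hw w rfl),
      fun hw _ hu => Set.mem_singleton_iff.1 hu ▸ hagree.symm.accessible.proves_mem hw⟩
  exact ⟨fun hsat => hev.1 hsat.1, fun hw => ⟨hev.2 hw,
    (hA.know hm hh).2 (World.and_mem_iff.1 (World.mem_of_imp (.ax .a5) hw)).2⟩⟩

end TruthAt

theorem truthAt (A : Form Ag PVar PConst PropVar) : TruthAt CS A := by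
  induction A with
  | pv p =>
    intro m w hm h _
    change nextLetter h m ∈ (canonicalModel CS).val p ((canonicalModel CS).run m) ↔ _
    rw [hm]
    rfl
  | and A B ihA ihB =>
    intro m w hm h hh
    rw [JstitModel.Sat, ihA hm hh, ihB hm hh, World.and_mem_iff]
  | neg A ih =>
    intro m w hm h hh
    rw [JstitModel.Sat, ih hm hh, World.neg_mem_iff]
  | stit j A ih => exact ih.stit j
  | box A ih => exact ih.box
  | proves t A ih => exact ih.proves t
  | know A ih => exact ih.know
  | ann t =>
    intro m w hm h _
    change t ∈ ((canonicalModel CS).run m).act (nextLetter h m) ↔ _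
    rw [hm]
    rfl

theorem CSConsistent.exists_sat {Γ : Set (Form Ag PVar PConst PropVar)} (hΓ : CSConsistent CS Γ) :
    ∃ m, ∃ h ∈ (wordTree _).H m, ∀ A ∈ Γ, (canonicalModel CS).toJstitModel.Sat A m h := by
  obtain rfl | hne := Γ.eq_empty_or_nonempty
  · obtain ⟨h, hh⟩ := (wordTree (Option (World CS))).H_nonempty []
    exact ⟨[], h, hh, fun _ => False.elim⟩
  · obtain ⟨w, hw⟩ := exists_world_of_not_derives_bot (hΓ.not_derives_bot hne)
    obtain ⟨m, h, -, hh, hiff⟩ := w.exists_sat_iff_mem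
    exact ⟨m, h, hh, fun A hA => (hiff A (truthAt A)).2 (hw hA)⟩

end CanonicalModel

theorem stmt14_general {Ag PVar PConst PropVar : Type} [Inhabited PropVar]
    (CS : Set (Form Ag PVar PConst PropVar)) (hCS : IsConstSpec CS)
    (Γ : Set (Form Ag PVar PConst PropVar))
    (𝓕 : ∀ Mo : Type, JstitFrame Mo Ag → Prop)
    (hlow : ∀ (Mo : Type) (F : JstitFrame Mo Ag),
      F.Regular → F.Unirelational → 𝓕 Mo F)
    (hhigh : ∀ (Mo : Type) (F : JstitFrame Mo Ag), 𝓕 Mo F → F.Regular) :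
    CSConsistent CS Γ ↔
      ∃ (Mo : Type) (M : JstitModel Mo Ag PVar PConst PropVar),
        𝓕 Mo M.toJstitFrame ∧ CSNormal CS M ∧
        ∃ m h, h ∈ M.toTemporalFrame.H m ∧ ∀ A ∈ Γ, M.Sat A m h := by
  constructor
  · intro hcons
    let N := canonicalModel CS
    obtain ⟨m, h, hh, hsat⟩ := hcons.exists_sat
    exact ⟨_, N.toJstitModel, hlow _ _ N.regular_toJstitFrame N.unirelational_toJstitFrame,
      csNormal_canonicalModel CS, m, h, hh, hsat⟩
  · rintro ⟨Mo, M, hM, hnorm, m, h, hh, hsat⟩ ⟨A, L, hA, hL, hbot⟩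
    have hvalid := JstitModel.valid_of_proves hCS hnorm (hhigh Mo _ hM) hbot m h hh
    refine JstitModel.not_sat_bot (JstitModel.sat_imp.1 hvalid (JstitModel.sat_andList.2 ?_))
    exact List.forall_mem_cons.2 ⟨hsat A hA, fun B hB => hsat B (hL B hB)⟩

/-- Theorem 6: for any class 𝓕 of jstit frames for Ag squeezed between
the unirelational regular frames and the regular frames, Γ is CS-consistent iff Γ is
satisfiable in the class of CS-normal jstit models based on frames from 𝓕. -/
theorem stmt14 {Ag PVar PConst PropVar : Type} [Finite Ag]
    [Countable PVar] [Infinite PVar] [Countable PConst] [Infinite PConst]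
    [Countable PropVar] [Infinite PropVar] [Inhabited PropVar]
    (CS : Set (Form Ag PVar PConst PropVar)) (hCS : IsConstSpec CS)
    (Γ : Set (Form Ag PVar PConst PropVar))
    (𝓕 : ∀ Mo : Type, JstitFrame Mo Ag → Prop)
    (hlow : ∀ (Mo : Type) (F : JstitFrame Mo Ag),
      F.Regular → F.Unirelational → 𝓕 Mo F)
    (hhigh : ∀ (Mo : Type) (F : JstitFrame Mo Ag), 𝓕 Mo F → F.Regular) :
    CSConsistent CS Γ ↔
      ∃ (Mo : Type) (M : JstitModel Mo Ag PVar PConst PropVar),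
        𝓕 Mo M.toJstitFrame ∧ CSNormal CS M ∧
        ∃ m h, h ∈ M.toTemporalFrame.H m ∧ ∀ A ∈ Γ, M.Sat A m h := by
  exact stmt14_general CS hCS Γ 𝓕 hlow hhigh
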